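/- For the exponential utility function u(t) = (1/γ)(1 - e^{-γt}) with γ > 0, the Optimized Certainty Equivalent S_u(X) = sup_{η∈ℝ} {η + E[u(X-η)]} of a bounded random variable X equals the entropic risk value -(1/γ) ln E[e^{-γX}]. -/

import Mathlib

open MeasureTheory Real

/-!
Let `u` be the exponential utility and `c` the entropic value of `X`, so that
`E[e^{-γX}] = e^{-γc}`. Hence `E[u(X - η)] = u(c - η)` for every `η`: after any shift, `X` may be
replaced by the constant `c`. As `u` lies below the identity and touches it at `0`,
`η + u(c - η) ≤ c`, with equality at `η = c`.
-/

/-- The exponential (CARA) utility with risk aversion `γ`, normalised by `u 0 = 0` and `u' 0 = 1`;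
for `γ = 0` it is the junk value `0` rather than the limit `t`. -/
noncomputable def expUtility (γ t : ℝ) : ℝ :=
  (1 - exp (-γ * t)) / γ

/-- The entropic value of `X` at risk aversion `γ`, i.e. its certainty equivalent under
`expUtility γ`, written with the cumulant generating function `log E[e^{tX}]` at `t = -γ`. -/
noncomputable def entropicValue {Ω : Type*} [MeasurableSpace Ω] (X : Ω → ℝ) (μ : Measure Ω)
    (γ : ℝ) : ℝ :=
  -(1 / γ) * ProbabilityTheory.cgf X μ (-γ)

theorem expUtility_zero (γ : ℝ) : expUtility γ 0 = 0 := by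
  simp [expUtility]

theorem expUtility_le_self {γ : ℝ} (hγ : 0 < γ) (t : ℝ) : expUtility γ t ≤ t := by
  rw [expUtility, div_le_iff₀ hγ]
  linarith [add_one_le_exp (-γ * t)]

theorem isGreatest_range_add_comp_sub {G : Type*} [AddCommGroup G] [PartialOrder G]
    [IsOrderedAddMonoid G] {u : G → G} (hu₀ : u 0 = 0) (hu : ∀ t, u t ≤ t) (c : G) :
    IsGreatest (Set.range fun η ↦ η + u (c - η)) c := by
  refine ⟨⟨c, by simp [hu₀]⟩, ?_⟩
  rintro _ ⟨η, rfl⟩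
  calc
    η + u (c - η) ≤ η + (c - η) := by gcongr; exact hu _
    _ = c := add_sub_cancel η c

section EntropicValue

variable {Ω : Type*} [MeasurableSpace Ω] {μ : Measure Ω} {X : Ω → ℝ} {γ : ℝ}

theorem exp_neg_mul_entropicValue [NeZero μ] (hγ : γ ≠ 0)
    (hX : Integrable (fun ω ↦ exp (-γ * X ω)) μ) :
    exp (-γ * entropicValue X μ γ) = ∫ ω, exp (-γ * X ω) ∂μ := by
  have hcgf : -γ * entropicValue X μ γ = ProbabilityTheory.cgf X μ (-γ) := by
    rw [entropicValue]
    field_simp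
  rw [hcgf, ProbabilityTheory.exp_cgf hX, ProbabilityTheory.mgf]

theorem integral_expUtility_sub [IsProbabilityMeasure μ] (hγ : γ ≠ 0)
    (hX : Integrable (fun ω ↦ exp (-γ * X ω)) μ) (η : ℝ) :
    ∫ ω, expUtility γ (X ω - η) ∂μ = expUtility γ (entropicValue X μ γ - η) := by
  have exp_shift (x : ℝ) : exp (-γ * (x - η)) = exp (γ * η) * exp (-γ * x) := by
    rw [← exp_add]
    ring_nf
  simp only [expUtility, exp_shift]
  rw [integral_div, integral_sub (integrable_const 1) (hX.const_mul _), integral_const_mul,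
    integral_const, probReal_univ, one_smul, exp_neg_mul_entropicValue hγ hX]

theorem oce_exponential_eq_entropic_general [IsProbabilityMeasure μ] (hγ : 0 < γ)
    (hX : Integrable (fun ω ↦ exp (-γ * X ω)) μ) :
    IsGreatest (Set.range fun η ↦ η + ∫ ω, expUtility γ (X ω - η) ∂μ) (entropicValue X μ γ) := by
  simp only [integral_expUtility_sub hγ.ne' hX]
  exact isGreatest_range_add_comp_sub (expUtility_zero γ) (expUtility_le_self hγ) _

end EntropicValue

/-- For the exponential utility `u t = (1/γ)(1 - exp (-γ t))` with `γ > 0`,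
the Optimized Certainty Equivalent `S_u(X) = ⨆ η, (η + E[u(X - η)])` of a bounded random
variable `X` equals the entropic risk value `-(1/γ) ln E[exp (-γ X)]`. -/
theorem oce_exponential_eq_entropic
    {Ω : Type*} [MeasurableSpace Ω] (μ : Measure Ω) [IsProbabilityMeasure μ]
    (X : Ω → ℝ) (hX : Measurable X) (C : ℝ) (hbdd : ∀ ω, |X ω| ≤ C)
    (γ : ℝ) (hγ : 0 < γ) :
    (⨆ η : ℝ, (η + ∫ ω, (1 - Real.exp (-γ * (X ω - η))) / γ ∂μ))
      = -(1 / γ) * Real.log (∫ ω, Real.exp (-γ * X ω) ∂μ) := by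
  have hexp : Integrable (fun ω ↦ exp (-γ * X ω)) μ :=
    ProbabilityTheory.integrable_exp_mul_of_mem_Icc hX.aemeasurable
      (.of_forall fun ω ↦ abs_le.mp (hbdd ω))
  exact (oce_exponential_eq_entropic_general hγ hexp).isLUB.ciSup_eq
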